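/- Let ℰ = {ε_p(j), j ∈ [p]} be a Gaussian triangular array with standard Normal marginals, u_p = Φ^{←}(1 − 1/p), and suppose P(|max_{j∈[p]} ε_p(j)/u_p − 1| > δ_p) → 0 for some positive sequence δ_p → 0. Let f: ℝ → ℝ be an even function (f(x) = f(−x)), differentiable, eventually strictly increasing, monotone non-decreasing on (0, ∞), with lim_{x→∞} f(x) ≠ 0, and with f′ eventually increasing or eventually decreasing as x → ∞. Set η_p(j) := f(ε_p(j)) and v_p := f(u_p). Then for every sequence d_p with d_p ≥ d_p* := u_p δ_p · max{|f′(u_p(1−δ_p))|, |f′(u_p(1+δ_p))|} / |f(u_p)|, one has P(|max_{j∈[p]} η_p(j)/v_p − 1| > d_p) → 0 as p → ∞. -/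

import Mathlib

open MeasureTheory ProbabilityTheory Filter Topology

/-- The standard Normal cumulative distribution function `Φ`. -/
noncomputable def stdGaussianCDF (u : ℝ) : ℝ :=
  ∫ x in Set.Iic u, Real.exp (-x ^ 2 / 2) / Real.sqrt (2 * Real.pi)

/-- The generalized inverse (quantile function) `Φ^{←}` of the standard Normal cdf. -/
noncomputable def stdGaussianQuantile (y : ℝ) : ℝ :=
  sInf {x : ℝ | y ≤ stdGaussianCDF x}

/-- `u_p = Φ^{←}(1 - 1/p)`. -/
noncomputable def uQuantile (p : ℕ) : ℝ :=
  stdGaussianQuantile (1 - 1 / (p : ℝ))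

/-- A finite family of random variables is jointly Gaussian if every linear
combination is Gaussian. -/
def IsJointGaussian {Ω : Type*} [MeasureSpace Ω] {ι : Type*} [Fintype ι]
    (X : ι → Ω → ℝ) : Prop :=
  ∀ c : ι → ℝ, ∃ m : ℝ, ∃ v : NNReal,
    MeasureTheory.Measure.map (fun ω => ∑ i, c i * X i ω) ℙ =
      ProbabilityTheory.gaussianReal m v

lemma stdGaussianCDF_eq_cdf (x : ℝ) : stdGaussianCDF x = cdf (gaussianReal 0 1) x := by
  rw [cdf_eq_real, Measure.real, gaussianReal_apply_eq_integral _ one_ne_zero,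
    ENNReal.toReal_ofReal
      (setIntegral_nonneg measurableSet_Iic fun y _ => gaussianPDFReal_nonneg _ _ _),
    stdGaussianCDF]
  refine setIntegral_congr_fun measurableSet_Iic fun y _ => ?_
  simp [gaussianPDFReal, div_eq_inv_mul]

lemma stdGaussianCDF_lt_one (x : ℝ) : stdGaussianCDF x < 1 := by
  rw [stdGaussianCDF_eq_cdf, cdf_eq_real]
  have hpos : 0 < (gaussianReal 0 1).real (Set.Ioi x) := by
    refine ENNReal.toReal_pos (fun h => ?_) (measure_ne_top _ _)
    have := gaussianReal_absolutelyContinuous' 0 one_ne_zero h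
    simp at this
  have hcompl := probReal_compl_eq_one_sub (μ := gaussianReal 0 1) (measurableSet_Iic (a := x))
  rw [Set.compl_Iic] at hcompl
  linarith

lemma tendsto_uQuantile_atTop : Tendsto uQuantile atTop atTop := by
  refine tendsto_atTop.2 fun K => ?_
  have hlim : Tendsto (fun p : ℕ => 1 - 1 / (p : ℝ)) atTop (𝓝 1) := by
    simpa using (tendsto_const_nhds (x := (1 : ℝ))).sub
      (tendsto_one_div_atTop_nhds_zero_nat (𝕜 := ℝ))
  filter_upwards [hlim.eventually_const_lt (stdGaussianCDF_lt_one K), eventually_gt_atTop 0]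
    with p hp hp0
  refine le_csInf ?_ fun x hx => ?_
  · have hlt : 1 - 1 / (p : ℝ) < 1 := by
      have : (0 : ℝ) < 1 / p := by positivity
      linarith
    obtain ⟨x, hx⟩ :=
      ((tendsto_cdf_atTop (gaussianReal 0 1)).eventually_const_lt hlt).exists
    exact ⟨x, by simpa [stdGaussianCDF_eq_cdf] using hx.le⟩
  · by_contra! hxK
    have hmono : stdGaussianCDF x ≤ stdGaussianCDF K := by
      simpa only [stdGaussianCDF_eq_cdf] using monotone_cdf _ hxK.le
    exact absurd (hp.trans_le (le_trans hx hmono)) (lt_irrefl _)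

/-- A jointly Gaussian family with centred marginals has a symmetric law. -/
lemma IsJointGaussian.map_neg_eq {Ω : Type*} [MeasureSpace Ω]
    [IsProbabilityMeasure (ℙ : Measure Ω)] {ι : Type*} [Fintype ι]
    {X : ι → Ω → ℝ} (hX : IsJointGaussian X) (hmeas : ∀ i, Measurable (X i))
    {v : ι → NNReal} (hmarg : ∀ i, Measure.map (X i) ℙ = gaussianReal 0 (v i)) :
    Measure.map (fun ω i => -X i ω) ℙ = Measure.map (fun ω i => X i ω) ℙ := by
  classical
  have hXm : Measurable (fun ω i => X i ω) := measurable_pi_lambda _ hmeas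
  have hnegm : Measurable (fun ω i => -X i ω) := measurable_pi_lambda _ fun i => (hmeas i).neg
  have hint : ∀ i, Integrable (X i) ℙ := fun i => by
    have : Integrable id (Measure.map (X i) ℙ) := by
      rw [hmarg i]; exact IsGaussian.integrable_id
    exact this.comp_measurable (hmeas i)
  have hmean : ∀ i, ∫ ω, X i ω = 0 := fun i => by
    rw [← integral_map (φ := X i) (f := fun x : ℝ => x) (hmeas i).aemeasurable
      (by fun_prop), hmarg i, integral_id_gaussianReal]
  have := Measure.isProbabilityMeasure_map (μ := (ℙ : Measure Ω)) hXm.aemeasurable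
  have := Measure.isProbabilityMeasure_map (μ := (ℙ : Measure Ω)) hnegm.aemeasurable
  refine Measure.ext_of_charFunDual (funext fun L => ?_)
  rw [charFunDual_eq_charFun_map_one, charFunDual_eq_charFun_map_one,
    Measure.map_map L.continuous.measurable hnegm, Measure.map_map L.continuous.measurable hXm]
  congr 1
  let c : ι → ℝ := fun i => L (Pi.single i 1)
  have hL : (L ∘ fun ω i => X i ω) = fun ω => ∑ i, c i * X i ω := by
    funext ω
    simp only [Function.comp_apply, c]
    conv_lhs => rw [pi_eq_sum_univ' (fun i => X i ω), map_sum]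
    refine Finset.sum_congr rfl fun i _ => ?_
    rw [map_smul, smul_eq_mul, mul_comm]
  have hLneg : (L ∘ fun ω i => -X i ω) = (fun x => -x) ∘ (L ∘ fun ω i => X i ω) := by
    funext ω
    exact map_neg L (fun i => X i ω)
  obtain ⟨m, w, hmw⟩ := hX c
  have hsum : Measurable fun ω => ∑ i, c i * X i ω := by fun_prop
  have hm : m = 0 := by
    rw [← integral_id_gaussianReal (μ := m) (v := w), ← hmw,
      integral_map hsum.aemeasurable (by fun_prop),
      integral_finsetSum _ fun i _ => (hint i).const_mul _]
    simp [integral_const_mul, hmean]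
  rw [hLneg, hL, ← Measure.map_map measurable_neg hsum, hmw, gaussianReal_map_neg, hm, neg_zero]

lemma MonotoneOn.Ici_of_Ioi {f : ℝ → ℝ} {a : ℝ} (hf : MonotoneOn f (Set.Ioi a))
    (hc : ContinuousWithinAt f (Set.Ioi a) a) : MonotoneOn f (Set.Ici a) := by
  intro x hx y hy hxy
  rcases (Set.mem_Ici.1 hx).eq_or_lt with rfl | hx'
  · rcases hxy.eq_or_lt with rfl | hlt
    · exact le_rfl
    · refine le_of_tendsto hc ?_
      filter_upwards [Ioo_mem_nhdsGT hlt] with z hz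
      exact hf hz.1 hlt hz.2.le
  · exact hf hx' (hx'.trans_le hxy) hxy

/-- The maximum of an even function, monotone on `[0, ∞)`, of a finite family lies between its
values at two bounds for the maximum of the absolute values. -/
lemma iSup_comp_even_mem_Icc {ι : Type*} [Finite ι] [Nonempty ι] {f : ℝ → ℝ}
    (heven : ∀ x, f x = f (-x)) (hmono : MonotoneOn f (Set.Ici 0)) {x : ι → ℝ} {a b : ℝ}
    (ha : 0 ≤ a) (hax : a ≤ ⨆ i, x i) (hxb : ⨆ i, x i ≤ b) (hnxb : ⨆ i, -x i ≤ b) :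
    ⨆ i, f (x i) ∈ Set.Icc (f a) (f b) := by
  have habs : ∀ y, f |y| = f y := fun y => by
    rcases abs_choice y with h | h <;> rw [h]
    exact (heven y).symm
  have hle : ∀ i, |x i| ≤ b := fun i => abs_le'.2
    ⟨(le_ciSup (Set.finite_range _).bddAbove i).trans hxb,
      (le_ciSup (f := fun i => -x i) (Set.finite_range _).bddAbove i).trans hnxb⟩
  constructor
  · obtain ⟨i, hi⟩ := exists_eq_ciSup_of_finite (f := x)
    rw [← hi] at hax
    exact (hmono ha (ha.trans hax) hax).trans
      (le_ciSup (f := fun i => f (x i)) (Set.finite_range _).bddAbove i)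
  · refine ciSup_le fun i => ?_
    rw [← habs]
    exact hmono (Set.mem_Ici.2 (abs_nonneg _)) ((abs_nonneg _).trans (hle i)) (hle i)

lemma abs_le_max_abs_of_monotoneOn_or_antitoneOn {g : ℝ → ℝ} {s : Set ℝ}
    (hg : MonotoneOn g s ∨ AntitoneOn g s) {a b x : ℝ} (ha : a ∈ s) (hb : b ∈ s) (hx : x ∈ s)
    (hax : a ≤ x) (hxb : x ≤ b) : |g x| ≤ max |g a| |g b| := by
  rcases hg with h | h
  · exact abs_le_max_abs_abs (h ha hx hax) (h hx hb hxb)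
  · rw [max_comm]
    exact abs_le_max_abs_abs (h hx hb hxb) (h ha hx hax)

lemma eventually_ne_zero_of_strictMonoOn {f : ℝ → ℝ} {M : ℝ} (hf : StrictMonoOn f (Set.Ici M)) :
    ∀ᶠ x in atTop, f x ≠ 0 := by
  by_cases h : ∃ z ∈ Set.Ici M, f z = 0
  · obtain ⟨z, hz, hfz⟩ := h
    filter_upwards [eventually_gt_atTop z] with x hx
    exact (hfz ▸ hf hz (le_trans hz hx.le) hx : 0 < f x).ne'
  · filter_upwards [eventually_ge_atTop M] with x hx h0
    exact h ⟨x, hx, h0⟩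

/-- Concentration of maxima for even functions of a Gaussian array: if
`P(|max ε_p(i)/u_p - 1| > δ_p) → 0` and `f` is even, differentiable, eventually strictly
increasing, non-decreasing on `(0,∞)`, with limit at `+∞` different from `0` and eventually
monotone derivative, then `P(|max f(ε_p(i))/f(u_p) - 1| > d_p) → 0` for every `d_p`
dominating `d_p* = u_p δ_p max{|f'(u_p(1-δ_p))|, |f'(u_p(1+δ_p))|}/|f(u_p)|`. -/
theorem concentration_even_function
    {Ω : Type*} [MeasureSpace Ω] [IsProbabilityMeasure (ℙ : Measure Ω)]
    (ε : (p : ℕ) → Fin p → Ω → ℝ)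
    (hmeas : ∀ p i, Measurable (ε p i))
    (hGauss : ∀ p, IsJointGaussian (ε p))
    (hmarg : ∀ p i, Measure.map (ε p i) ℙ = gaussianReal 0 1)
    (δ : ℕ → ℝ) (hδ_pos : ∀ p, 0 < δ p) (hδ0 : Tendsto δ atTop (𝓝 0))
    (hconc : Tendsto (fun p : ℕ =>
        ℙ {ω | δ p < |(⨆ i : Fin p, ε p i ω) / uQuantile p - 1|}) atTop (𝓝 0))
    (f : ℝ → ℝ)
    (hf_even : ∀ x, f x = f (-x))
    (hf_diff : Differentiable ℝ f)
    (hf_strict : ∃ M : ℝ, StrictMonoOn f (Set.Ici M))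
    (hf_mono_pos : MonotoneOn f (Set.Ioi (0 : ℝ)))
    (hf_lim : ¬ Tendsto f atTop (𝓝 0))
    (hf_deriv_mono : (∃ M : ℝ, MonotoneOn (deriv f) (Set.Ici M)) ∨
      (∃ M : ℝ, AntitoneOn (deriv f) (Set.Ici M)))
    (d : ℕ → ℝ)
    (hd : ∀ p : ℕ,
      uQuantile p * δ p *
          max |deriv f (uQuantile p * (1 - δ p))| |deriv f (uQuantile p * (1 + δ p))| /
        |f (uQuantile p)| ≤ d p) :
    Tendsto (fun p : ℕ =>
        ℙ {ω | d p < |(⨆ i : Fin p, f (ε p i ω)) / f (uQuantile p) - 1|})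
      atTop (𝓝 0) := by
  obtain ⟨M, hM⟩ := hf_strict
  obtain ⟨N, hN⟩ : ∃ N, MonotoneOn (deriv f) (Set.Ici N) ∨ AntitoneOn (deriv f) (Set.Ici N) := by
    rcases hf_deriv_mono with ⟨N, h⟩ | ⟨N, h⟩
    · exact ⟨N, Or.inl h⟩
    · exact ⟨N, Or.inr h⟩
  have hmono : MonotoneOn f (Set.Ici 0) :=
    hf_mono_pos.Ici_of_Ioi (hf_diff 0).continuousAt.continuousWithinAt
  have hu := tendsto_uQuantile_atTop
  have hlow : Tendsto (fun p => uQuantile p * (1 - δ p)) atTop atTop :=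
    hu.atTop_mul_pos one_pos (by simpa using (tendsto_const_nhds (x := (1 : ℝ))).sub hδ0)
  have hsymm : ∀ p, ℙ {ω | δ p < |(⨆ i : Fin p, -ε p i ω) / uQuantile p - 1|} =
      ℙ {ω | δ p < |(⨆ i : Fin p, ε p i ω) / uQuantile p - 1|} := fun p => by
    have hset : MeasurableSet {x : Fin p → ℝ | δ p < |(⨆ i, x i) / uQuantile p - 1|} := by
      have hsup : Measurable fun x : Fin p → ℝ => ⨆ i, x i :=
        Measurable.iSup fun i => measurable_pi_apply i
      exact measurableSet_lt measurable_const ((hsup.div_const _).sub_const _).abs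
    have h := congrArg (fun μ => μ {x : Fin p → ℝ | δ p < |(⨆ i, x i) / uQuantile p - 1|})
      ((hGauss p).map_neg_eq (hmeas p) (hmarg p))
    rwa [Measure.map_apply (measurable_pi_lambda _ fun i => (hmeas p i).fun_neg) hset,
      Measure.map_apply (measurable_pi_lambda _ (hmeas p)) hset] at h
  have hbound := hconc.add hconc
  rw [add_zero] at hbound
  refine tendsto_of_tendsto_of_tendsto_of_le_of_le' tendsto_const_nhds hbound
    (Eventually.of_forall fun _ => zero_le) ?_
  filter_upwards [eventually_gt_atTop 0, hu.eventually_gt_atTop 0, hlow.eventually_gt_atTop 0,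
    hlow.eventually_ge_atTop N, hu.eventually (eventually_ne_zero_of_strictMonoOn hM)]
    with p hp hup hlp hlN hfu
  have : Nonempty (Fin p) := ⟨⟨0, hp⟩⟩
  conv_rhs => lhs; rw [← hsymm p]
  refine (measure_mono ?_).trans (measure_union_le _ _)
  intro ω hω
  by_contra hnot
  simp only [Set.mem_union, Set.mem_ofPred_eq, not_or, not_lt] at hnot hω
  have hscale : ∀ s : ℝ, |s / uQuantile p - 1| ≤ δ p →
      uQuantile p * (1 - δ p) ≤ s ∧ s ≤ uQuantile p * (1 + δ p) := fun s hs => by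
    rw [abs_le] at hs
    have hs1 : 1 - δ p ≤ s / uQuantile p := by linarith
    have hs2 : s / uQuantile p ≤ 1 + δ p := by linarith
    rw [le_div_iff₀ hup] at hs1
    rw [div_le_iff₀ hup] at hs2
    constructor <;> linarith
  have hδu : 0 < uQuantile p * δ p := mul_pos hup (hδ_pos p)
  have hS := iSup_comp_even_mem_Icc hf_even hmono hlp.le (hscale _ hnot.2).1
    (hscale _ hnot.2).2 (hscale _ hnot.1).2
  set u := uQuantile p
  set a := u * (1 - δ p) with ha
  set b := u * (1 + δ p) with hb
  set D := max |deriv f a| |deriv f b|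
  have hau : a ≤ u := by rw [ha]; linarith
  have hub : u ≤ b := by rw [hb]; linarith
  have hab : a ≤ b := hau.trans hub
  have hlip : ∀ x ∈ Set.Icc a b, |f x - f u| ≤ D * |x - u| := fun x hx =>
    (convex_Icc a b).norm_image_sub_le_of_norm_deriv_le (fun y _ => hf_diff y)
      (fun y hy => abs_le_max_abs_of_monotoneOn_or_antitoneOn hN hlN (hlN.trans hab)
        (hlN.trans hy.1) hy.1 hy.2) ⟨hau, hub⟩ hx
  have hfa := hlip a ⟨le_rfl, hab⟩
  have hfb := hlip b ⟨hab, le_rfl⟩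
  rw [show a - u = -(u * δ p) by rw [ha]; ring, abs_neg, abs_of_pos hδu] at hfa
  rw [show b - u = u * δ p by rw [hb]; ring, abs_of_pos hδu] at hfb
  rw [abs_le] at hfa hfb
  refine absurd ((hd p).trans_lt hω) (not_lt.2 ?_)
  rw [div_sub_one hfu, abs_div]
  refine div_le_div_of_nonneg_right ?_ (abs_nonneg _)
  rw [abs_le]
  constructor <;> linarith [hS.1, hS.2]
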